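/- Let q be an odd prime power, n a positive integer, and μ ∈ 𝔛_n. Then v_2(d_μ) ≥ v_2( n! / ∏_{f ∈ Φ} |μ(f)|! ) + Σ_{f ∈ Φ} v_2(𝔣_{μ(f)}). -/

import Mathlib

/-- The `i`-th part (0-indexed, parts in weakly decreasing order) of the partition whose
multiset of parts is `lam`; `0` if `i` is at least the number of parts. -/
def partNth (lam : Multiset ℕ) (i : ℕ) : ℕ :=
  ((lam.sort (· ≤ ·)).reverse.getD i 0)

/-- The `j`-th part (0-indexed) of the conjugate partition: the number of parts `> j`. -/
def conjNth (lam : Multiset ℕ) (j : ℕ) : ℕ :=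
  (lam.filter (fun m => j < m)).card

/-- The cells `(i, j)` (0-indexed) of the Young diagram of `lam`. -/
def cellsOf (lam : Multiset ℕ) : Finset (ℕ × ℕ) :=
  (Finset.range (Multiset.card lam) ×ˢ Finset.range lam.sum).filter
    (fun c => c.2 < partNth lam c.1)

/-- The hook length of the cell `c = (i, j)` of `lam`:
`(λᵢ − j) + (λ'ⱼ − i) − 1`. -/
def hookLen (lam : Multiset ℕ) (c : ℕ × ℕ) : ℕ :=
  (partNth lam c.1 - c.2) + (conjNth lam c.2 - c.1) - 1

/-- The product of all hook lengths of `lam`. -/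
def hookProd (lam : Multiset ℕ) : ℕ :=
  ∏ c ∈ cellsOf lam, hookLen lam c

/-- `α(λ) = Σᵢ (i − 1)·λᵢ` (1-indexed), i.e. `Σᵢ i·λᵢ` for the 0-indexed parts. -/
def alphaStat (lam : Multiset ℕ) : ℕ :=
  ∑ i ∈ Finset.range (Multiset.card lam), i * partNth lam i

/-- `𝔣_λ = n! / ∏_{h ∈ H(λ)} |h|`, the degree of the irreducible character of `S_n`
indexed by `λ`, as a rational number. -/
def fDeg (lam : Multiset ℕ) : ℚ :=
  (Nat.factorial lam.sum : ℚ) / (hookProd lam : ℚ)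

/-- `d_λ(x) = x^{α(λ)} · ∏_{i=1}^{n} (x^i − 1) / ∏_{h ∈ H(λ)} (x^{|h|} − 1)`. -/
def dDeg (lam : Multiset ℕ) (x : ℕ) : ℚ :=
  (x : ℚ) ^ alphaStat lam * (∏ i ∈ Finset.Icc 1 lam.sum, ((x : ℚ) ^ i - 1)) /
    ∏ c ∈ cellsOf lam, ((x : ℚ) ^ hookLen lam c - 1)
/-- `μ` is a member of `𝔛_n`: a finitely supported assignment of a partition (given by its
multiset of positive parts) to each monic irreducible polynomial `f ≠ x` over `F`, such that
`Σ_f |μ(f)|·deg f = n`. -/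
def IsXn (F : Type*) [Field F] (n : ℕ) (μ : Polynomial F →₀ Multiset ℕ) : Prop :=
  (∀ f ∈ μ.support, f.Monic ∧ Irreducible f ∧ f ≠ Polynomial.X) ∧
  (∀ f : Polynomial F, ∀ m ∈ μ f, 0 < m) ∧
  (μ.sum fun f lam => lam.sum * f.natDegree) = n

/-- `a_μ = ∏_{i=1}^{n} (q^i − 1) / ∏_{f ∈ Φ} ∏_{i=1}^{|μ(f)|} (q^{d(f)·i} − 1)`. -/
noncomputable def aMu (q : ℕ) {F : Type*} [Field F] (n : ℕ)
    (μ : Polynomial F →₀ Multiset ℕ) : ℚ :=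
  (∏ i ∈ Finset.Icc 1 n, ((q : ℚ) ^ i - 1)) /
    ∏ f ∈ μ.support, ∏ i ∈ Finset.Icc 1 (μ f).sum, ((q : ℚ) ^ (f.natDegree * i) - 1)

/-- `ψ_m(x) = ∏_{i=1}^{m} (x^i − 1)`. -/
def psiPoly (m : ℕ) (x : ℚ) : ℚ := ∏ i ∈ Finset.Icc 1 m, (x ^ i - 1)

/-- `H(λ, x) = x^{α(λ)} / ∏_{h ∈ H(λ)} (x^{|h|} − 1)`. -/
def hFactor (lam : Multiset ℕ) (x : ℚ) : ℚ :=
  x ^ alphaStat lam / ∏ c ∈ cellsOf lam, (x ^ hookLen lam c - 1)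

/-- `d_μ = ψ_n(q) · ∏_{f ∈ Φ} H(μ(f), q^{d(f)})`, the degree of the irreducible character of
`GL(n, q)` indexed by `μ`, as a rational number. -/
noncomputable def dMu (q : ℕ) {F : Type*} [Field F] (n : ℕ)
    (μ : Polynomial F →₀ Multiset ℕ) : ℚ :=
  psiPoly n (q : ℚ) * ∏ f ∈ μ.support, hFactor (μ f) ((q : ℚ) ^ f.natDegree)

/-!
Write `v` for the 2-adic valuation. Lifting the exponent gives, for odd `q` and `i > 0`,
`v (q ^ i - 1) = v i + v (q - 1) + [i even] * (v (q + 1) - 1)`, so every cyclotomic product is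
controlled by counting its even exponents. As `d_μ = a_μ * ∏ f, d_{μ(f)} (q ^ deg f)` with
`a_μ = ψ_n(q) / ∏ f, ψ_{|μ(f)|} (q ^ deg f)` and `d_λ = ψ_{|λ|} * H(λ, ·)`, two counts are needed.

* For `v (n! / ∏ f, |μ(f)|!) ≤ v a_μ`: the even multiples of `d` up to `m * d` are among the
  `⌊m * d / 2⌋` even numbers up to `m * d`, and `v d ≤ d - 1`.
* For `v 𝔣_λ ≤ v (d_λ x)`: at most half of the hooks of `λ` are even. Let `β_0 > β_1 > ⋯` be the
  first-column hook lengths. The hook lengths in row `i` are the elements of `{1, …, β_i}` that are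
  not of the form `β_i - β_j`. Summing signs over all rows yields
  `2 * ∑ h, (-1) ^ |h| = S - S ^ 2 ≤ 0`, where `S = ∑ i, (-1) ^ β_i`.
-/

open Finset

/-! ### Young diagrams and hooks -/

lemma lt_countP_lt_iff_lt_getD {L : List ℕ} (hL : L.Pairwise (· ≥ ·)) (i j : ℕ) :
    i < L.countP (fun m => j < m) ↔ j < L.getD i 0 := by
  induction L generalizing i with
  | nil => simp
  | cons a l ih =>
    obtain ⟨ha, hl⟩ := List.pairwise_cons.1 hL
    by_cases hja : j < a
    · cases i with
      | zero => simp [hja]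
      | succ i => simpa [hja] using ih hl i
    · have hcount : l.countP (fun m => j < m) = 0 := by
        rw [List.countP_eq_zero]
        intro x hx
        simpa using (ha x hx).trans (not_lt.1 hja)
      cases i with
      | zero => simp [hja, hcount]
      | succ i => simpa [hja, hcount] using ih hl i

lemma sum_range_length_getD (L : List ℕ) : ∑ i ∈ range L.length, L.getD i 0 = L.sum := by
  induction L with
  | nil => simp
  | cons a l ih => simp [sum_range_succ', add_comm, ← ih]

section YoungDiagram

variable (lam : Multiset ℕ)

lemma lt_conjNth_iff_lt_partNth (i j : ℕ) : i < conjNth lam j ↔ j < partNth lam i := by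
  have hsorted : (lam.sort (· ≤ ·)).reverse.Pairwise (· ≥ ·) :=
    List.pairwise_reverse.2 (Multiset.pairwise_sort lam (· ≤ ·))
  rw [partNth, ← lt_countP_lt_iff_lt_getD hsorted, List.countP_reverse, conjNth,
    ← Multiset.countP_eq_card_filter, ← Multiset.coe_countP, Multiset.sort_eq]

lemma conjNth_le_card (j : ℕ) : conjNth lam j ≤ Multiset.card lam :=
  Multiset.card_le_card (Multiset.filter_le _ _)

lemma conjNth_antitone : Antitone (conjNth lam) := fun _ _ hj =>
  Multiset.card_le_card (Multiset.monotone_filter_right _ fun _ h => hj.trans_lt h)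

lemma partNth_antitone : Antitone (partNth lam) := by
  intro i i' hi
  by_contra! hlt
  have hconj := (lt_conjNth_iff_lt_partNth lam i' (partNth lam i)).2 hlt
  exact lt_irrefl _ ((lt_conjNth_iff_lt_partNth lam i _).1 (hi.trans_lt hconj))

lemma sum_partNth : ∑ i ∈ range (Multiset.card lam), partNth lam i = lam.sum := by
  have hlength : (lam.sort (· ≤ ·)).reverse.length = Multiset.card lam := by simp
  simp only [partNth]
  rw [← hlength, sum_range_length_getD, List.sum_reverse, ← Multiset.sum_coe, Multiset.sort_eq]

lemma sum_cellsOf {M : Type*} [AddCommMonoid M] (g : ℕ × ℕ → M) :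
    ∑ c ∈ cellsOf lam, g c =
      ∑ i ∈ range (Multiset.card lam), ∑ j ∈ range (partNth lam i), g (i, j) := by
  rw [cellsOf, sum_filter, sum_product]
  refine sum_congr rfl fun i hi => ?_
  have hpart : partNth lam i ≤ lam.sum :=
    sum_partNth lam ▸ single_le_sum (fun _ _ => Nat.zero_le _) hi
  rw [← sum_filter]
  congr 1
  ext j
  simp only [mem_filter, mem_range]
  omega

lemma card_cellsOf : (cellsOf lam).card = lam.sum := by
  rw [card_eq_sum_ones, sum_cellsOf]
  simp [sum_partNth]

variable {lam}

lemma hookLen_pos {c : ℕ × ℕ} (hc : c ∈ cellsOf lam) : 0 < hookLen lam c := by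
  have hpart : c.2 < partNth lam c.1 := (mem_filter.1 hc).2
  have hconj := (lt_conjNth_iff_lt_partNth lam c.1 c.2).2 hpart
  unfold hookLen
  omega

variable (lam)

lemma hookProd_ne_zero : hookProd lam ≠ 0 :=
  prod_ne_zero_iff.2 fun _ hc => Nat.ne_of_gt (hookLen_pos hc)

/-- The beta numbers `λᵢ + (k - 1 - i)` of a partition with `k` parts; when all parts are positive
they are its first-column hook lengths. They are meaningful only for `i < k`: beyond that the
subtraction truncates. -/
def betaNumber (i : ℕ) : ℕ := partNth lam i + (Multiset.card lam - 1 - i)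

lemma betaNumber_strictAntiOn : StrictAntiOn (betaNumber lam) (Set.Iio (Multiset.card lam)) := by
  intro i hi i' hi' hlt
  have hpart := partNth_antitone lam hlt.le
  simp only [Set.mem_Iio] at hi hi'
  unfold betaNumber
  omega

lemma hookLen_row_strictAntiOn (i : ℕ) :
    StrictAntiOn (fun j => hookLen lam (i, j)) (Set.Iio (partNth lam i)) := by
  intro j hj j' hj' hlt
  have hconj := (lt_conjNth_iff_lt_partNth lam i j').2 hj'
  have hanti := conjNth_antitone lam hlt.le
  simp only [Set.mem_Iio] at hj hj'
  simp only [hookLen]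
  omega

variable {lam}

lemma hookLen_mem_Icc_betaNumber {i j : ℕ} (hj : j < partNth lam i) :
    hookLen lam (i, j) ∈ Icc 1 (betaNumber lam i) := by
  have hconj := (lt_conjNth_iff_lt_partNth lam i j).2 hj
  have hcard := conjNth_le_card lam j
  simp only [mem_Icc, hookLen, betaNumber]
  omega

/-- Row `i'` either meets column `j`, and then `β_i - β_i'` is smaller than the hook length at
`(i, j)`, or it does not, and then `β_i - β_i'` is larger. -/
lemma hookLen_ne_betaNumber_sub {i i' j : ℕ} (hj : j < partNth lam i) (hi : i < i')
    (hi' : i' < Multiset.card lam) :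
    hookLen lam (i, j) ≠ betaNumber lam i - betaNumber lam i' := by
  have hconj := (lt_conjNth_iff_lt_partNth lam i j).2 hj
  have hiff := lt_conjNth_iff_lt_partNth lam i' j
  have hanti := partNth_antitone lam hi.le
  simp only [hookLen, betaNumber]
  omega

theorem sum_hookLen_row_add_sum_betaNumber_sub {M : Type*} [AddCommMonoid M] (g : ℕ → M) {i : ℕ}
    (hi : i < Multiset.card lam) :
    ∑ j ∈ range (partNth lam i), g (hookLen lam (i, j)) +
        ∑ i' ∈ Ioo i (Multiset.card lam), g (betaNumber lam i - betaNumber lam i') =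
      ∑ x ∈ Icc 1 (betaNumber lam i), g x := by
  have hβ : ∀ i' ∈ Ioo i (Multiset.card lam), betaNumber lam i' < betaNumber lam i := fun i' hi' =>
    betaNumber_strictAntiOn lam hi (mem_Ioo.1 hi').2 (mem_Ioo.1 hi').1
  have hinj_hook : Set.InjOn (fun j => hookLen lam (i, j)) (range (partNth lam i)) := by
    simpa using (hookLen_row_strictAntiOn lam i).injOn
  have hinj_diff : Set.InjOn (fun i' => betaNumber lam i - betaNumber lam i')
      (Ioo i (Multiset.card lam)) := by
    intro a ha b hb hab
    have ha' := hβ a ha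
    have hb' := hβ b hb
    exact (betaNumber_strictAntiOn lam).injOn (mem_Ioo.1 ha).2 (mem_Ioo.1 hb).2
      (by dsimp only at hab; omega)
  have hdisj : Disjoint ((range (partNth lam i)).image fun j => hookLen lam (i, j))
      ((Ioo i (Multiset.card lam)).image fun i' => betaNumber lam i - betaNumber lam i') := by
    simp only [disjoint_left, mem_image, mem_range, mem_Ioo]
    rintro _ ⟨j, hj, rfl⟩ ⟨i', hi', heq⟩
    exact hookLen_ne_betaNumber_sub hj hi'.1 hi'.2 heq.symm
  rw [← sum_image hinj_hook, ← sum_image hinj_diff, ← sum_union hdisj]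
  congr 1
  refine eq_of_subset_of_card_le (union_subset ?_ ?_) ?_
  · exact image_subset_iff.2 fun j hj => hookLen_mem_Icc_betaNumber (mem_range.1 hj)
  · refine image_subset_iff.2 fun i' hi' => ?_
    have := hβ i' hi'
    simp only [mem_Icc]
    omega
  · rw [card_union_of_disjoint hdisj, card_image_of_injOn hinj_hook, card_image_of_injOn hinj_diff]
    simp only [Nat.card_Icc, card_range, Nat.card_Ioo, betaNumber]
    omega

end YoungDiagram

/-! ### Even hooks -/

lemma two_mul_sum_Icc_neg_one_pow {R : Type*} [CommRing R] (n : ℕ) :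
    2 * ∑ x ∈ Icc 1 n, (-1 : R) ^ x = (-1) ^ n - 1 := by
  induction n with
  | zero => simp
  | succ n ih =>
    rw [sum_Icc_succ_top (by omega), mul_add, ih]
    ring

lemma sq_sum_range_eq_sum_sq_add {R : Type*} [CommSemiring R] (x : ℕ → R) (k : ℕ) :
    (∑ i ∈ range k, x i) ^ 2 =
      ∑ i ∈ range k, x i ^ 2 + 2 * ∑ i ∈ range k, ∑ j ∈ Ioo i k, x i * x j := by
  have hswap : ∑ i ∈ range k, ∑ j ∈ Ioo i k, x i * x j =
      ∑ j ∈ range k, ∑ i ∈ range j, x i * x j :=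
    sum_comm' fun i j => by simp only [mem_range, mem_Ioo]; omega
  rw [hswap]
  clear hswap
  induction k with
  | zero => simp
  | succ k ih =>
    simp only [sum_range_succ, ← sum_mul]
    simp only [← sum_mul] at ih
    rw [add_sq, ih]
    ring

theorem two_mul_sum_neg_one_pow_hookLen (lam : Multiset ℕ) :
    2 * ∑ c ∈ cellsOf lam, (-1 : ℤ) ^ hookLen lam c =
      ∑ i ∈ range (Multiset.card lam), (-1) ^ betaNumber lam i -
        (∑ i ∈ range (Multiset.card lam), (-1) ^ betaNumber lam i) ^ 2 := by
  have hrow : ∀ i ∈ range (Multiset.card lam),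
      2 * ∑ j ∈ range (partNth lam i), (-1 : ℤ) ^ hookLen lam (i, j) =
        (-1) ^ betaNumber lam i - 1 - 2 * ∑ i' ∈ Ioo i (Multiset.card lam),
          (-1) ^ betaNumber lam i * (-1) ^ betaNumber lam i' := by
    intro i hi
    have hdiff :
        ∑ i' ∈ Ioo i (Multiset.card lam), (-1 : ℤ) ^ (betaNumber lam i - betaNumber lam i') =
          ∑ i' ∈ Ioo i (Multiset.card lam), (-1) ^ betaNumber lam i * (-1) ^ betaNumber lam i' := by
      refine sum_congr rfl fun i' hi' => ?_
      have hlt := betaNumber_strictAntiOn lam (mem_range.1 hi) (mem_Ioo.1 hi').2 (mem_Ioo.1 hi').1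
      rw [← pow_add]
      exact neg_one_pow_congr (by rw [Nat.even_sub hlt.le, Nat.even_add])
    have hpartition :=
      sum_hookLen_row_add_sum_betaNumber_sub (fun x => (-1 : ℤ) ^ x) (mem_range.1 hi)
    rw [← hdiff, ← two_mul_sum_Icc_neg_one_pow, ← hpartition]
    ring
  rw [sum_cellsOf, mul_sum, sum_congr rfl hrow, sq_sum_range_eq_sum_sq_add]
  simp only [sum_sub_distrib, ← mul_sum, ← pow_mul, (even_two.mul_left _).neg_one_pow]
  ring

theorem two_mul_card_even_hookLen_le (lam : Multiset ℕ) :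
    2 * #{c ∈ cellsOf lam | Even (hookLen lam c)} ≤ lam.sum := by
  have hsign : ∑ c ∈ cellsOf lam, (-1 : ℤ) ^ hookLen lam c =
      2 * #{c ∈ cellsOf lam | Even (hookLen lam c)} - lam.sum := by
    have hterm : ∀ h : ℕ, (-1 : ℤ) ^ h = 2 * (if Even h then 1 else 0) - 1 := by
      intro h
      split_ifs with heven
      · simp [heven]
      · simp [Nat.not_even_iff_odd.1 heven]
    simp only [hterm, sum_sub_distrib, ← mul_sum, sum_boole, sum_const, card_cellsOf]
    simp
  have hnonpos : 2 * ∑ c ∈ cellsOf lam, (-1 : ℤ) ^ hookLen lam c ≤ 0 := by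
    rw [two_mul_sum_neg_one_pow_hookLen, sub_nonpos]
    exact Int.le_self_sq _
  omega

/-! ### Valuations of `q ^ i - 1` -/

lemma padicValRat_prod {p : ℕ} [Fact p.Prime] {ι : Type*} {s : Finset ι} {g : ι → ℚ}
    (h : ∀ i ∈ s, g i ≠ 0) : padicValRat p (∏ i ∈ s, g i) = ∑ i ∈ s, padicValRat p (g i) := by
  classical
  induction s using Finset.induction_on with
  | empty => simp
  | insert a s ha ih =>
    obtain ⟨hga, hgs⟩ := forall_mem_insert .. |>.1 h
    rw [prod_insert ha, sum_insert ha, padicValRat.mul hga (prod_ne_zero_iff.2 hgs), ih hgs]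

lemma sub_one_ne_zero_of_one_lt_abs {q : ℤ} (hq : 1 < |q|) : q - 1 ≠ 0 := by
  intro h
  simp [sub_eq_zero.1 h] at hq

lemma add_one_ne_zero_of_one_lt_abs {q : ℤ} (hq : 1 < |q|) : q + 1 ≠ 0 := by
  intro h
  simp [eq_neg_of_add_eq_zero_left h] at hq

lemma one_lt_abs_pow {q : ℤ} (hq : 1 < |q|) {i : ℕ} (hi : i ≠ 0) : 1 < |q ^ i| := by
  rw [abs_pow]
  exact one_lt_pow₀ hq hi

lemma intCast_pow_sub_one_ne_zero {q : ℤ} (hq : 1 < |q|) {i : ℕ} (hi : i ≠ 0) :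
    (q : ℚ) ^ i - 1 ≠ 0 := by
  exact_mod_cast sub_one_ne_zero_of_one_lt_abs (one_lt_abs_pow hq hi)

lemma one_le_padicValRat_two_of_even {z : ℤ} (hz : z ≠ 0) (heven : Even z) :
    1 ≤ padicValRat 2 (z : ℚ) := by
  have hdvd : 2 ∣ z.natAbs := Int.natCast_dvd.1 heven.two_dvd
  rw [padicValRat.of_int]
  exact_mod_cast one_le_padicValNat_of_dvd (Int.natAbs_ne_zero.2 hz) hdvd

lemma natCast_padicValInt {p : ℕ} [hp : Fact p.Prime] {z : ℤ} (hz : z ≠ 0) :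
    (padicValInt p z : ℕ∞) = emultiplicity (p : ℤ) z := by
  rw [padicValInt.of_ne_one_ne_zero hp.out.ne_one hz,
    (padicValRat.finite_int_prime_iff.2 hz).emultiplicity_eq_multiplicity]

theorem padicValRat_two_pow_sub_one {q : ℤ} (hodd : Odd q) (hq : 1 < |q|) {i : ℕ} (hi : i ≠ 0) :
    padicValRat 2 ((q : ℚ) ^ i - 1) = padicValRat 2 (i : ℚ) + padicValRat 2 ((q : ℚ) - 1) +
      if Even i then padicValRat 2 ((q : ℚ) + 1) - 1 else 0 := by
  have hsub := sub_one_ne_zero_of_one_lt_abs hq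
  have hadd := add_one_ne_zero_of_one_lt_abs hq
  have hpow : q ^ i - 1 ≠ 0 := by exact_mod_cast intCast_pow_sub_one_ne_zero hq hi
  have htwo : (2 : ℤ) ∣ q - 1 := (hodd.sub_odd odd_one).two_dvd
  have hndvd : ¬ (2 : ℤ) ∣ q := by rwa [← even_iff_two_dvd, Int.not_even_iff_odd]
  have hcast : padicValRat 2 ((q : ℚ) ^ i - 1) = padicValInt 2 (q ^ i - 1) ∧
      padicValRat 2 ((q : ℚ) - 1) = padicValInt 2 (q - 1) ∧
      padicValRat 2 ((q : ℚ) + 1) = padicValInt 2 (q + 1) ∧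
      padicValRat 2 (i : ℚ) = padicValInt 2 (i : ℤ) := by
    simp only [← padicValRat.of_int]
    push_cast
    exact ⟨rfl, rfl, rfl, rfl⟩
  obtain ⟨hcast_pow, hcast_sub, hcast_add, hcast_i⟩ := hcast
  rw [hcast_pow, hcast_sub, hcast_add, hcast_i]
  split_ifs with heven
  · have hlte := Int.two_pow_sub_pow (y := 1) htwo hndvd heven
    rw [one_pow, ← Nat.cast_two, ← natCast_padicValInt hpow, ← natCast_padicValInt hadd,
      ← natCast_padicValInt hsub, ← natCast_padicValInt (Nat.cast_ne_zero.2 hi)] at hlte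
    norm_cast at hlte
    omega
  · have hi_ndvd : ¬ ((2 : ℕ) : ℤ) ∣ (i : ℤ) := by
      rwa [Int.natCast_dvd_natCast, ← even_iff_two_dvd]
    have hlte := emultiplicity_pow_sub_pow_of_prime (y := 1) Int.prime_two htwo hndvd hi_ndvd
    rw [one_pow, ← Nat.cast_two, ← natCast_padicValInt hpow, ← natCast_padicValInt hsub] at hlte
    rw [padicValInt.eq_zero_of_not_dvd hi_ndvd, Nat.cast_inj.1 hlte]
    simp

theorem padicValRat_two_prod_pow_sub_one {q : ℤ} (hodd : Odd q) (hq : 1 < |q|) {ι : Type*}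
    {s : Finset ι} {g : ι → ℕ} (hg : ∀ i ∈ s, g i ≠ 0) :
    padicValRat 2 (∏ i ∈ s, ((q : ℚ) ^ g i - 1)) =
      padicValRat 2 (∏ i ∈ s, (g i : ℚ)) + #s * padicValRat 2 ((q : ℚ) - 1) +
        #{i ∈ s | Even (g i)} * (padicValRat 2 ((q : ℚ) + 1) - 1) := by
  rw [padicValRat_prod fun i hi => intCast_pow_sub_one_ne_zero hq (hg i hi),
    sum_congr rfl fun i hi => padicValRat_two_pow_sub_one hodd hq (hg i hi),
    padicValRat_prod fun i hi => Nat.cast_ne_zero.2 (hg i hi)]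
  simp only [sum_add_distrib, sum_const, ← sum_filter, nsmul_eq_mul]

lemma one_le_padicValRat_two_sub_one {q : ℤ} (hodd : Odd q) (hq : 1 < |q|) :
    1 ≤ padicValRat 2 ((q : ℚ) - 1) := by
  exact_mod_cast one_le_padicValRat_two_of_even (sub_one_ne_zero_of_one_lt_abs hq)
    (hodd.sub_odd odd_one)

lemma one_le_padicValRat_two_add_one {q : ℤ} (hodd : Odd q) (hq : 1 < |q|) :
    1 ≤ padicValRat 2 ((q : ℚ) + 1) := by
  exact_mod_cast one_le_padicValRat_two_of_even (add_one_ne_zero_of_one_lt_abs hq)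
    (hodd.add_odd odd_one)

/-! ### Valuations of `ψ_n` and of hook quotients -/

lemma card_even_Icc_one (n : ℕ) : #{i ∈ Icc 1 n | Even i} = n / 2 := by
  simp only [even_iff_two_dvd]
  exact Nat.Ioc_filter_dvd_card_eq_div n 2

lemma card_even_mul_Icc_one_le {d : ℕ} (hd : d ≠ 0) (m : ℕ) :
    #{i ∈ Icc 1 m | Even (d * i)} ≤ m * d / 2 := by
  rw [← card_even_Icc_one]
  refine card_le_card_of_injOn (d * ·) ?_ (mul_right_injective₀ hd).injOn
  intro i hi
  simp only [coe_filter, mem_Icc, Set.mem_ofPred_eq] at hi ⊢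
  obtain ⟨⟨hi_pos, hi_le⟩, heven⟩ := hi
  exact ⟨⟨Nat.mul_pos (Nat.pos_of_ne_zero hd) hi_pos, mul_comm m d ▸ Nat.mul_le_mul_left d hi_le⟩,
    heven⟩

lemma prod_Icc_one_natCast_eq_factorial {R : Type*} [CommSemiring R] (n : ℕ) :
    ∏ i ∈ Icc 1 n, (i : R) = n.factorial := by
  rw [← Nat.cast_prod]
  exact congrArg _ (prod_Ico_id_eq_factorial n)

section Psi

variable {q : ℤ}

lemma psiPoly_ne_zero (hq : 1 < |q|) (n : ℕ) : psiPoly n (q : ℚ) ≠ 0 :=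
  prod_ne_zero_iff.2 fun _ hi =>
    intCast_pow_sub_one_ne_zero hq (Nat.one_le_iff_ne_zero.1 (mem_Icc.1 hi).1)

theorem padicValRat_two_psiPoly (hodd : Odd q) (hq : 1 < |q|) (n : ℕ) :
    padicValRat 2 (psiPoly n (q : ℚ)) =
      padicValRat 2 (n.factorial : ℚ) + n * padicValRat 2 ((q : ℚ) - 1) +
        (n / 2 : ℕ) * (padicValRat 2 ((q : ℚ) + 1) - 1) := by
  have hpos : ∀ i ∈ Icc 1 n, i ≠ 0 := fun i hi => Nat.one_le_iff_ne_zero.1 (mem_Icc.1 hi).1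
  rw [psiPoly, padicValRat_two_prod_pow_sub_one hodd hq hpos, prod_Icc_one_natCast_eq_factorial,
    card_even_Icc_one, Nat.card_Icc, Nat.add_sub_cancel]

theorem padicValRat_two_psiPoly_pow_le (hodd : Odd q) (hq : 1 < |q|) {d : ℕ} (hd : d ≠ 0) (m : ℕ) :
    padicValRat 2 (psiPoly m ((q : ℚ) ^ d)) ≤
      padicValRat 2 (m.factorial : ℚ) + (m * d : ℕ) * padicValRat 2 ((q : ℚ) - 1) +
        (m * d / 2 : ℕ) * (padicValRat 2 ((q : ℚ) + 1) - 1) := by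
  have hsub := one_le_padicValRat_two_sub_one hodd hq
  have hadd := one_le_padicValRat_two_add_one hodd hq
  have hpos : ∀ i ∈ Icc 1 m, d * i ≠ 0 := fun i hi =>
    mul_ne_zero hd (Nat.one_le_iff_ne_zero.1 (mem_Icc.1 hi).1)
  have hprod : padicValRat 2 (∏ i ∈ Icc 1 m, ((d * i : ℕ) : ℚ)) =
      m * padicValRat 2 (d : ℚ) + padicValRat 2 (m.factorial : ℚ) := by
    simp only [Nat.cast_mul, prod_mul_distrib, prod_const, prod_Icc_one_natCast_eq_factorial,
      Nat.card_Icc, Nat.add_sub_cancel]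
    rw [padicValRat.mul (pow_ne_zero _ (Nat.cast_ne_zero.2 hd))
      (Nat.cast_ne_zero.2 m.factorial_ne_zero), padicValRat.pow]
  have hd_val : padicValRat 2 (d : ℚ) + 1 ≤ d := by
    rw [padicValRat.of_nat]
    exact_mod_cast Nat.padicValNat_lt_self hd
  have hlin : padicValRat 2 (d : ℚ) + padicValRat 2 ((q : ℚ) - 1) ≤
      d * padicValRat 2 ((q : ℚ) - 1) := by
    have hd_one : (1 : ℤ) ≤ d := by exact_mod_cast Nat.one_le_iff_ne_zero.2 hd
    linarith [mul_nonneg (sub_nonneg.2 hd_one) (sub_nonneg.2 hsub)]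
  have hlin_mul := mul_le_mul_of_nonneg_left hlin (Nat.cast_nonneg (α := ℤ) m)
  have heven := mul_le_mul_of_nonneg_right
    (Nat.cast_le (α := ℤ).2 (card_even_mul_Icc_one_le hd m)) (sub_nonneg.2 hadd)
  simp only [psiPoly, ← pow_mul]
  rw [padicValRat_two_prod_pow_sub_one hodd hq hpos, hprod, Nat.card_Icc, Nat.add_sub_cancel,
    Nat.cast_mul m d]
  linarith

lemma sum_half_le_half_sum {ι : Type*} (s : Finset ι) (g : ι → ℕ) :
    ∑ i ∈ s, g i / 2 ≤ (∑ i ∈ s, g i) / 2 := by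
  rw [Nat.le_div_iff_mul_le two_pos, sum_mul]
  exact sum_le_sum fun i _ => Nat.div_mul_le_self _ _

theorem padicValRat_two_multinomial_le_psiPoly_div (hodd : Odd q) (hq : 1 < |q|) {ι : Type*}
    (s : Finset ι) (m d : ι → ℕ) (hd : ∀ i ∈ s, d i ≠ 0) :
    padicValRat 2 (((∑ i ∈ s, m i * d i).factorial : ℚ) / ∏ i ∈ s, ((m i).factorial : ℚ)) ≤
      padicValRat 2 (psiPoly (∑ i ∈ s, m i * d i) (q : ℚ) /
        ∏ i ∈ s, psiPoly (m i) ((q : ℚ) ^ d i)) := by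
  have hfac : ∀ n : ℕ, (n.factorial : ℚ) ≠ 0 := fun n => Nat.cast_ne_zero.2 n.factorial_ne_zero
  have hpsi : ∀ i ∈ s, psiPoly (m i) ((q : ℚ) ^ d i) ≠ 0 := fun i hi => by
    exact_mod_cast psiPoly_ne_zero (one_lt_abs_pow hq (hd i hi)) (m i)
  have hadd := one_le_padicValRat_two_add_one hodd hq
  have hhalf := mul_le_mul_of_nonneg_right
    (Nat.cast_le (α := ℤ).2 (sum_half_le_half_sum s fun i => m i * d i)) (sub_nonneg.2 hadd)
  have hsum := sum_le_sum fun i hi => padicValRat_two_psiPoly_pow_le hodd hq (hd i hi) (m i)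
  simp only [sum_add_distrib, ← sum_mul, ← Nat.cast_sum] at hsum
  rw [padicValRat.div (hfac _) (prod_ne_zero_iff.2 fun i _ => hfac _),
    padicValRat.div (psiPoly_ne_zero hq _) (prod_ne_zero_iff.2 hpsi),
    padicValRat_prod fun i _ => hfac _, padicValRat_prod hpsi, padicValRat_two_psiPoly hodd hq]
  linarith

lemma prod_pow_hookLen_sub_one_ne_zero (hq : 1 < |q|) (lam : Multiset ℕ) :
    ∏ c ∈ cellsOf lam, ((q : ℚ) ^ hookLen lam c - 1) ≠ 0 :=
  prod_ne_zero_iff.2 fun _ hc => intCast_pow_sub_one_ne_zero hq (hookLen_pos hc).ne'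

lemma hFactor_ne_zero (hq : 1 < |q|) (lam : Multiset ℕ) : hFactor lam (q : ℚ) ≠ 0 := by
  have hq0 : (q : ℚ) ≠ 0 := by
    rw [Int.cast_ne_zero, ← abs_pos]
    exact zero_lt_one.trans hq
  exact div_ne_zero (pow_ne_zero _ hq0) (prod_pow_hookLen_sub_one_ne_zero hq lam)

theorem padicValRat_two_hFactor (hodd : Odd q) (hq : 1 < |q|) (lam : Multiset ℕ) :
    padicValRat 2 (hFactor lam (q : ℚ)) =
      -(padicValRat 2 (hookProd lam : ℚ) + lam.sum * padicValRat 2 ((q : ℚ) - 1) +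
        #{c ∈ cellsOf lam | Even (hookLen lam c)} * (padicValRat 2 ((q : ℚ) + 1) - 1)) := by
  have hq_val : padicValRat 2 (q : ℚ) = 0 := by
    rw [padicValRat.of_int, padicValInt.eq_zero_of_not_dvd, Nat.cast_zero]
    rwa [Nat.cast_two, ← even_iff_two_dvd, Int.not_even_iff_odd]
  have hq0 : (q : ℚ) ≠ 0 := Int.cast_ne_zero.2 fun h => by simp [h] at hodd
  rw [hFactor, padicValRat.div (pow_ne_zero _ hq0) (prod_pow_hookLen_sub_one_ne_zero hq lam),
    padicValRat.pow, hq_val, mul_zero, zero_sub,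
    padicValRat_two_prod_pow_sub_one hodd hq fun _ hc => (hookLen_pos hc).ne', card_cellsOf,
    hookProd, Nat.cast_prod]

theorem padicValRat_two_fDeg_le_psiPoly_mul_hFactor (hodd : Odd q) (hq : 1 < |q|)
    (lam : Multiset ℕ) :
    padicValRat 2 (fDeg lam) ≤ padicValRat 2 (psiPoly lam.sum (q : ℚ) * hFactor lam (q : ℚ)) := by
  have hadd := one_le_padicValRat_two_add_one hodd hq
  have hcount : #{c ∈ cellsOf lam | Even (hookLen lam c)} ≤ lam.sum / 2 := by
    have := two_mul_card_even_hookLen_le lam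
    omega
  have heven := mul_le_mul_of_nonneg_right (Nat.cast_le (α := ℤ).2 hcount) (sub_nonneg.2 hadd)
  rw [fDeg, padicValRat.div (Nat.cast_ne_zero.2 lam.sum.factorial_ne_zero)
      (Nat.cast_ne_zero.2 (hookProd_ne_zero lam)),
    padicValRat.mul (psiPoly_ne_zero hq _) (hFactor_ne_zero hq lam),
    padicValRat_two_psiPoly hodd hq, padicValRat_two_hFactor hodd hq]
  linarith

end Psi

theorem two_adic_valuation_of_dMu_general {q : ℤ} (hodd : Odd q) (hq : 1 < |q|) {ι : Type*}
    (s : Finset ι) (lam : ι → Multiset ℕ) (d : ι → ℕ) (hd : ∀ i ∈ s, d i ≠ 0) :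
    padicValRat 2 (((∑ i ∈ s, (lam i).sum * d i).factorial : ℚ) /
          ∏ i ∈ s, ((lam i).sum.factorial : ℚ)) +
        ∑ i ∈ s, padicValRat 2 (fDeg (lam i)) ≤
      padicValRat 2 (psiPoly (∑ i ∈ s, (lam i).sum * d i) (q : ℚ) *
        ∏ i ∈ s, hFactor (lam i) ((q : ℚ) ^ d i)) := by
  have hpsi : ∀ i ∈ s, psiPoly (lam i).sum ((q : ℚ) ^ d i) ≠ 0 := fun i hi => by
    exact_mod_cast psiPoly_ne_zero (one_lt_abs_pow hq (hd i hi)) (lam i).sum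
  have hH : ∀ i ∈ s, hFactor (lam i) ((q : ℚ) ^ d i) ≠ 0 := fun i hi => by
    exact_mod_cast hFactor_ne_zero (one_lt_abs_pow hq (hd i hi)) (lam i)
  have hfDeg : ∀ i ∈ s, padicValRat 2 (fDeg (lam i)) ≤
      padicValRat 2 (psiPoly (lam i).sum ((q : ℚ) ^ d i) * hFactor (lam i) ((q : ℚ) ^ d i)) :=
    fun i hi => by
      exact_mod_cast padicValRat_two_fDeg_le_psiPoly_mul_hFactor hodd.pow
        (one_lt_abs_pow hq (hd i hi)) (lam i)
  have hsplit : psiPoly (∑ i ∈ s, (lam i).sum * d i) (q : ℚ) *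
        ∏ i ∈ s, hFactor (lam i) ((q : ℚ) ^ d i) =
      (psiPoly (∑ i ∈ s, (lam i).sum * d i) (q : ℚ) /
          ∏ i ∈ s, psiPoly (lam i).sum ((q : ℚ) ^ d i)) *
        ∏ i ∈ s, psiPoly (lam i).sum ((q : ℚ) ^ d i) * hFactor (lam i) ((q : ℚ) ^ d i) := by
    rw [prod_mul_distrib, ← mul_assoc, div_mul_cancel₀ _ (prod_ne_zero_iff.2 hpsi)]
  have hne : ∀ i ∈ s, psiPoly (lam i).sum ((q : ℚ) ^ d i) * hFactor (lam i) ((q : ℚ) ^ d i) ≠ 0 :=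
    fun i hi => mul_ne_zero (hpsi i hi) (hH i hi)
  rw [hsplit, padicValRat.mul
    (div_ne_zero (psiPoly_ne_zero hq _) (prod_ne_zero_iff.2 hpsi)) (prod_ne_zero_iff.2 hne),
    padicValRat_prod hne]
  exact add_le_add
    (padicValRat_two_multinomial_le_psiPoly_div hodd hq s (fun i => (lam i).sum) d hd)
    (sum_le_sum hfDeg)

theorem two_adic_valuation_of_dMu
    (q : ℕ) (hq : IsPrimePow q) (hodd : Odd q)
    (F : Type*) [Field F] [Fintype F] (hFq : Fintype.card F = q)
    (n : ℕ) (hn : 0 < n) (μ : Polynomial F →₀ Multiset ℕ) (hμ : IsXn F n μ) :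
    padicValRat 2
          ((Nat.factorial n : ℚ) / ∏ f ∈ μ.support, (Nat.factorial (μ f).sum : ℚ)) +
        ∑ f ∈ μ.support, padicValRat 2 (fDeg (μ f)) ≤
      padicValRat 2 (dMu q n μ) := by
  obtain ⟨hΦ, -, rfl⟩ := hμ
  exact two_adic_valuation_of_dMu_general (q := q) (by exact_mod_cast hodd)
    (by simpa using hq.one_lt) μ.support μ Polynomial.natDegree
    fun f hf => (hΦ f hf).2.1.natDegree_pos.ne'
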